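/- The density p of GH(λ, α, β, δ, μ) satisfies p(x) = O(|x|^{λ−1}e^{−α|x|+βx}) and p'(x) = O(|x|^{λ−1}e^{−α|x|+βx}) as |x| → ∞; more precisely, p(x) ∼ ((α²−β²)^{λ/2}/(2(αδ)^λ K_λ(δ√(α²−β²))))·|x|^{λ−1}·e^{−α|x−μ|+β(x−μ)} as |x| → ∞. -/

import Mathlib

open Real MeasureTheory Filter Asymptotics

/-- Modified Bessel function of the first kind of order `ν`. -/
noncomputable def besselI (ν x : ℝ) : ℝ :=
  ∑' k : ℕ, (x / 2) ^ (ν + 2 * (k : ℝ)) / (Real.Gamma (ν + (k : ℝ) + 1) * (Nat.factorial k : ℝ))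

/-- Modified Bessel function of the second kind of order `ν`. -/
noncomputable def besselK (ν x : ℝ) : ℝ :=
  ∫ t in Set.Ioi (0 : ℝ), Real.exp (-x * Real.cosh t) * Real.cosh (ν * t)

/-- Density of the generalized hyperbolic distribution GH(λ, α, β, δ, μ). -/
noncomputable def ghPdf (lam α β δ μ x : ℝ) : ℝ :=
  ((α ^ 2 - β ^ 2) ^ (lam / 2) /
      (Real.sqrt (2 * Real.pi) * α ^ (lam - 1 / 2) * δ ^ lam *
        besselK lam (δ * Real.sqrt (α ^ 2 - β ^ 2)))) *
    Real.exp (β * (x - μ)) * (δ ^ 2 + (x - μ) ^ 2) ^ ((lam - 1 / 2) / 2) *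
    besselK (lam - 1 / 2) (α * Real.sqrt (δ ^ 2 + (x - μ) ^ 2))

/-- Density of the generalized inverse Gaussian distribution GIG(λ, a, b). -/
noncomputable def gigPdf (lam a b x : ℝ) : ℝ :=
  if 0 < x then
    (a / b) ^ (lam / 2) * (1 / (2 * besselK lam (Real.sqrt (a * b)))) *
      x ^ (lam - 1) * Real.exp (-(a * x + b / x) / 2)
  else 0

/-
Write `r = √(δ ^ 2 + (x - μ) ^ 2)` and `ν = lam - 1 / 2`. The density is a constant times
`exp (β * (x - μ)) * r ^ ν * K_ν (α * r)`, and `r - |x - μ| → 0`, so its asymptotics reduce to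
those of `K_ν`, which Laplace's method gives. The recurrence for `K_ν` yields
`(r ^ ν * K_ν (α * r))' = -α * r ^ ν * K_{ν - 1} (α * r)`; hence the derivative of the kernel of
index `lam` is `β` times this kernel minus `α * (x - μ)` times the kernel of index `lam - 1`.
The factor `x - μ` makes up for the lowered index, so both terms have the tail of the density.
-/

open scoped Topology

lemma cosh_mul_cosh (x y : ℝ) : cosh x * cosh y = (cosh (x + y) + cosh (x - y)) / 2 := by
  rw [cosh_add, cosh_sub]
  ring

lemma sinh_mul_sinh (x y : ℝ) : sinh x * sinh y = (cosh (x + y) - cosh (x - y)) / 2 := by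
  rw [cosh_add, cosh_sub]
  ring

lemma abs_sinh_le_cosh (t : ℝ) : |sinh t| ≤ cosh t := by
  rw [abs_sinh, ← cosh_abs]
  exact (sinh_lt_cosh _).le

lemma cosh_sub_one_eq_two_mul_sinh_half_sq (t : ℝ) : cosh t - 1 = 2 * sinh (t / 2) ^ 2 := by
  have h := cosh_two_mul (t / 2)
  rw [mul_div_cancel₀ t two_ne_zero, cosh_sq] at h
  linarith

lemma sq_div_two_le_cosh_sub_one (t : ℝ) : t ^ 2 / 2 ≤ cosh t - 1 := by
  have h : (t / 2) ^ 2 ≤ sinh (t / 2) ^ 2 := by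
    rw [sq_le_sq, abs_sinh]
    exact self_le_sinh_iff.2 (abs_nonneg _)
  rw [cosh_sub_one_eq_two_mul_sinh_half_sq]
  linarith

lemma tendsto_mul_cosh_div_sqrt_sub_one (s : ℝ) :
    Tendsto (fun y : ℝ => y * (cosh (s / √y) - 1)) atTop (𝓝 (s ^ 2 / 2)) := by
  have hderiv : HasDerivAt (fun u : ℝ => sinh (s / 2 * u)) (s / 2) 0 := by
    simpa using ((hasDerivAt_id (0 : ℝ)).const_mul (s / 2)).sinh
  have hinv : Tendsto (fun y : ℝ => (√y)⁻¹) atTop (𝓝[>] 0) :=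
    tendsto_inv_atTop_nhdsGT_zero.comp tendsto_sqrt_atTop
  have hslope := ((hderiv.tendsto_slope_zero_right.comp hinv).pow 2).const_mul 2
  rw [show 2 * (s / 2) ^ 2 = s ^ 2 / 2 by ring] at hslope
  refine hslope.congr' ?_
  filter_upwards [eventually_ge_atTop 0] with y hy
  rw [cosh_sub_one_eq_two_mul_sinh_half_sq, show s / √y / 2 = s / 2 * (√y)⁻¹ by ring]
  simp only [Function.comp, zero_add, mul_zero, sinh_zero, sub_zero, smul_eq_mul, inv_inv,
    mul_pow, sq_sqrt hy]
  ring

lemma integrable_exp_neg_mul_sq_mul_cosh {b : ℝ} (hb : 0 < b) (ν : ℝ) :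
    Integrable fun t : ℝ => exp (-b * t ^ 2) * cosh (ν * t) := by
  have hexp (c : ℝ) : Integrable fun t : ℝ => exp (-b * t ^ 2 + c * t) := by
    refine (integrable_cexp_quadratic (b := b) (by simpa using hb) c 0).re.congr
      (ae_of_all _ fun t => ?_)
    simp only [add_zero]
    norm_cast
  refine (((hexp ν).add (hexp (-ν))).div_const 2).congr (ae_of_all _ fun t => ?_)
  simp only [Pi.add_apply]
  rw [exp_add, exp_add, cosh_eq, neg_mul ν]
  ring

lemma integrable_exp_neg_mul_cosh_mul_cosh {x : ℝ} (hx : 0 < x) (ν : ℝ) :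
    Integrable fun t : ℝ => exp (-x * cosh t) * cosh (ν * t) := by
  refine (integrable_exp_neg_mul_sq_mul_cosh (half_pos hx) ν).mono' (by fun_prop)
    (ae_of_all _ fun t => ?_)
  rw [norm_of_nonneg (by positivity)]
  refine mul_le_mul_of_nonneg_right (exp_le_exp.2 ?_) (by positivity)
  nlinarith [sq_div_two_le_cosh_sub_one t]

lemma integrable_exp_neg_mul_cosh_mul_sinh {x : ℝ} (hx : 0 < x) (ν : ℝ) :
    Integrable fun t : ℝ => exp (-x * cosh t) * sinh (ν * t) := by
  refine (integrable_exp_neg_mul_cosh_mul_cosh hx ν).mono' (by fun_prop) (ae_of_all _ fun t => ?_)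
  rw [norm_mul, norm_of_nonneg (exp_pos _).le]
  gcongr
  exact abs_sinh_le_cosh _

lemma exp_neg_mul_cosh_mul_cosh_mul_cosh (ν x t : ℝ) :
    exp (-x * cosh t) * (cosh t * cosh (ν * t)) =
      (exp (-x * cosh t) * cosh ((ν + 1) * t) + exp (-x * cosh t) * cosh ((ν - 1) * t)) / 2 := by
  rw [mul_comm (cosh t), cosh_mul_cosh, ← add_one_mul, ← sub_one_mul]
  ring

lemma exp_neg_mul_cosh_mul_sinh_mul_sinh (ν x t : ℝ) :
    exp (-x * cosh t) * (sinh t * sinh (ν * t)) =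
      (exp (-x * cosh t) * cosh ((ν + 1) * t) - exp (-x * cosh t) * cosh ((ν - 1) * t)) / 2 := by
  rw [mul_comm (sinh t), sinh_mul_sinh, ← add_one_mul, ← sub_one_mul]
  ring

lemma integrable_exp_neg_mul_cosh_mul_cosh_mul_cosh {x : ℝ} (hx : 0 < x) (ν : ℝ) :
    Integrable fun t : ℝ => exp (-x * cosh t) * (cosh t * cosh (ν * t)) := by
  simp only [exp_neg_mul_cosh_mul_cosh_mul_cosh]
  exact ((integrable_exp_neg_mul_cosh_mul_cosh hx _).add
    (integrable_exp_neg_mul_cosh_mul_cosh hx _)).div_const 2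

lemma integrable_exp_neg_mul_cosh_mul_sinh_mul_sinh {x : ℝ} (hx : 0 < x) (ν : ℝ) :
    Integrable fun t : ℝ => exp (-x * cosh t) * (sinh t * sinh (ν * t)) := by
  simp only [exp_neg_mul_cosh_mul_sinh_mul_sinh]
  exact ((integrable_exp_neg_mul_cosh_mul_cosh hx _).sub
    (integrable_exp_neg_mul_cosh_mul_cosh hx _)).div_const 2

lemma integral_exp_neg_mul_cosh_mul_cosh_mul_cosh {x : ℝ} (hx : 0 < x) (ν : ℝ) :
    ∫ t in Set.Ioi (0 : ℝ), exp (-x * cosh t) * (cosh t * cosh (ν * t)) =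
      (besselK (ν + 1) x + besselK (ν - 1) x) / 2 := by
  simp only [exp_neg_mul_cosh_mul_cosh_mul_cosh, besselK]
  rw [integral_div, integral_add (integrable_exp_neg_mul_cosh_mul_cosh hx _).restrict
    (integrable_exp_neg_mul_cosh_mul_cosh hx _).restrict]

lemma integral_exp_neg_mul_cosh_mul_sinh_mul_sinh {x : ℝ} (hx : 0 < x) (ν : ℝ) :
    ∫ t in Set.Ioi (0 : ℝ), exp (-x * cosh t) * (sinh t * sinh (ν * t)) =
      (besselK (ν + 1) x - besselK (ν - 1) x) / 2 := by
  simp only [exp_neg_mul_cosh_mul_sinh_mul_sinh, besselK]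
  rw [integral_div, integral_sub (integrable_exp_neg_mul_cosh_mul_cosh hx _).restrict
    (integrable_exp_neg_mul_cosh_mul_cosh hx _).restrict]

lemma hasDerivAt_besselK {x : ℝ} (hx : 0 < x) (ν : ℝ) :
    HasDerivAt (besselK ν) (-((besselK (ν + 1) x + besselK (ν - 1) x) / 2)) x := by
  rw [← integral_exp_neg_mul_cosh_mul_cosh_mul_cosh hx, ← integral_neg]
  refine (hasDerivAt_integral_of_dominated_loc_of_deriv_le (𝕜 := ℝ)
    (μ := volume.restrict (Set.Ioi (0 : ℝ)))
    (F := fun y t => exp (-y * cosh t) * cosh (ν * t))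
    (F' := fun y t => -(exp (-y * cosh t) * (cosh t * cosh (ν * t))))
    (bound := fun t => exp (-(x / 2) * cosh t) * (cosh t * cosh (ν * t)))
    (Ioi_mem_nhds (half_lt_self hx)) (Eventually.of_forall fun y => by fun_prop)
    (integrable_exp_neg_mul_cosh_mul_cosh hx ν).restrict (by fun_prop)
    (ae_of_all _ fun t y hy => ?_)
    (integrable_exp_neg_mul_cosh_mul_cosh_mul_cosh (half_pos hx) ν).restrict
    (ae_of_all _ fun t y _ => ?_)).2
  · have hxy : x / 2 < y := hy
    rw [norm_neg, norm_of_nonneg (by positivity)]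
    gcongr
  · have hlin : HasDerivAt (fun y : ℝ => -y * cosh t) (-1 * cosh t) y :=
      (hasDerivAt_id y).neg.mul_const _
    convert! hlin.exp.mul_const (cosh (ν * t)) using 1
    ring

/- Integrate the derivative of `exp (-x * cosh t) * sinh (ν * t)`, which vanishes at `0` and `∞`. -/
lemma two_mul_mul_besselK {x : ℝ} (hx : 0 < x) (ν : ℝ) :
    2 * ν * besselK ν x = x * (besselK (ν + 1) x - besselK (ν - 1) x) := by
  have hderiv (t : ℝ) : HasDerivAt (fun t : ℝ => exp (-x * cosh t) * sinh (ν * t))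
      (ν * (exp (-x * cosh t) * cosh (ν * t)) -
        x * (exp (-x * cosh t) * (sinh t * sinh (ν * t)))) t := by
    have hexp := ((hasDerivAt_cosh t).const_mul (-x)).exp
    have hsinh := ((hasDerivAt_id t).const_mul ν).sinh
    convert! hexp.mul hsinh using 1
    simp only [id, mul_one]
    ring
  have hcosh := ((integrable_exp_neg_mul_cosh_mul_cosh hx ν).const_mul ν).integrableOn
    (s := Set.Ioi 0)
  have hsinh := ((integrable_exp_neg_mul_cosh_mul_sinh_mul_sinh hx ν).const_mul x).integrableOn
    (s := Set.Ioi 0)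
  have hint := hcosh.sub hsinh
  have hlim := tendsto_zero_of_hasDerivAt_of_integrableOn_Ioi (fun t _ => hderiv t) hint
    (integrable_exp_neg_mul_cosh_mul_sinh hx ν).integrableOn
  have hzero := integral_Ioi_of_hasDerivAt_of_tendsto' (fun t _ => hderiv t) hint hlim
  rw [integral_sub hcosh hsinh, integral_const_mul, integral_const_mul,
    integral_exp_neg_mul_cosh_mul_sinh_mul_sinh hx, ← besselK] at hzero
  simp only [mul_zero, sinh_zero, sub_zero] at hzero
  linarith

lemma hasDerivAt_rpow_mul_besselK {r : ℝ} (hr : 0 < r) {a : ℝ} (ha : 0 < a) (ν : ℝ) :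
    HasDerivAt (fun r => r ^ ν * besselK ν (a * r)) (-a * (r ^ ν * besselK (ν - 1) (a * r))) r := by
  have hpow := hasDerivAt_rpow_const (p := ν) (Or.inl hr.ne')
  have hK := (hasDerivAt_besselK (mul_pos ha hr) ν).comp r ((hasDerivAt_id r).const_mul a)
  have hrec := two_mul_mul_besselK (mul_pos ha hr) ν
  convert! hpow.mul hK using 1
  rw [rpow_sub_one hr.ne']
  simp only [Function.comp]
  field_simp
  linear_combination (-1 : ℝ) * hrec

lemma sqrt_mul_exp_mul_besselK {y : ℝ} (hy : 0 < y) (ν : ℝ) :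
    √y * exp y * besselK ν y =
      ∫ s in Set.Ioi (0 : ℝ), exp (-(y * (cosh (s / √y) - 1))) * cosh (ν * (s / √y)) := by
  have hsubst := integral_comp_mul_left_Ioi
    (fun t => exp (-(y * (cosh t - 1))) * cosh (ν * t)) 0 (inv_pos.2 (sqrt_pos.2 hy))
  simp only [mul_zero, inv_inv, smul_eq_mul, ← div_eq_inv_mul] at hsubst
  rw [hsubst, besselK, mul_assoc, ← integral_const_mul]
  congr 2 with t
  rw [← mul_assoc, ← exp_add]
  congr 2
  ring

lemma integral_Ioi_exp_neg_sq_div_two :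
    ∫ s in Set.Ioi (0 : ℝ), exp (-(1 / 2) * s ^ 2) = √(π / 2) := by
  rw [integral_gaussian_Ioi, show π / (1 / 2) = 2 ^ 2 * (π / 2) by ring,
    sqrt_mul (by positivity), sqrt_sq zero_le_two, mul_div_cancel_left₀ _ two_ne_zero]

lemma exp_neg_mul_mul_cosh_div_sqrt_le {y : ℝ} (hy : 1 ≤ y) (ν s : ℝ) :
    exp (-(y * (cosh (s / √y) - 1))) * cosh (ν * (s / √y)) ≤
      exp (-(1 / 2) * s ^ 2) * cosh (ν * s) := by
  have hy₀ : 0 < y := one_pos.trans_le hy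
  gcongr
  · have hcosh := sq_div_two_le_cosh_sub_one (s / √y)
    rw [div_pow, sq_sqrt hy₀.le] at hcosh
    calc -(y * (cosh (s / √y) - 1)) ≤ -(y * (s ^ 2 / y / 2)) := by gcongr
      _ = -(1 / 2) * s ^ 2 := by field_simp
  · rw [cosh_le_cosh, abs_mul, abs_mul, abs_div, abs_of_nonneg (sqrt_nonneg y)]
    gcongr
    exact div_le_self (abs_nonneg _) (one_le_sqrt.2 hy)

/- Laplace's method: after the substitution `t = s / √y` the integrand converges to a Gaussian. -/
lemma tendsto_sqrt_mul_exp_mul_besselK (ν : ℝ) :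
    Tendsto (fun y : ℝ => √y * exp y * besselK ν y) atTop (𝓝 √(π / 2)) := by
  rw [← integral_Ioi_exp_neg_sq_div_two]
  have hlim := tendsto_integral_filter_of_dominated_convergence
    (μ := volume.restrict (Set.Ioi (0 : ℝ))) (l := (atTop : Filter ℝ))
    (F := fun y s => exp (-(y * (cosh (s / √y) - 1))) * cosh (ν * (s / √y)))
    (f := fun s => exp (-(1 / 2) * s ^ 2))
    (fun s => exp (-(1 / 2) * s ^ 2) * cosh (ν * s))
    (Eventually.of_forall fun y => by fun_prop) ?_
    (integrable_exp_neg_mul_sq_mul_cosh one_half_pos ν).restrict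
    (ae_of_all _ fun s => ?_)
  · refine hlim.congr' ?_
    filter_upwards [eventually_gt_atTop 0] with y hy
    exact (sqrt_mul_exp_mul_besselK hy ν).symm
  · filter_upwards [eventually_ge_atTop 1] with y hy
    refine ae_of_all _ fun s => ?_
    rw [norm_of_nonneg (by positivity)]
    exact exp_neg_mul_mul_cosh_div_sqrt_le hy ν s
  · have hexp := (tendsto_mul_cosh_div_sqrt_sub_one s).neg.rexp
    have hcosh : Tendsto (fun y : ℝ => cosh (ν * (s / √y))) atTop (𝓝 1) := by
      rw [← cosh_zero, ← mul_zero ν]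
      exact (continuous_cosh.tendsto _).comp
        ((tendsto_sqrt_atTop.const_div_atTop s).const_mul ν)
    simpa only [mul_one, show -(s ^ 2 / 2) = -(1 / 2) * s ^ 2 by ring] using hexp.mul hcosh

lemma isEquivalent_besselK (ν : ℝ) :
    besselK ν ~[atTop] fun y => √(π / (2 * y)) * exp (-y) := by
  apply isEquivalent_of_tendsto_one
  have hlim := (tendsto_sqrt_mul_exp_mul_besselK ν).div_const √(π / 2)
  rw [div_self (by positivity)] at hlim
  refine hlim.congr' ?_
  filter_upwards [eventually_gt_atTop 0] with y hy
  rw [Pi.div_apply, ← div_div π, sqrt_div' (π / 2) hy.le, exp_neg]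
  field_simp

lemma isEquivalent_rpow_mul_besselK {a : ℝ} (ha : 0 < a) (ν : ℝ) :
    (fun r => r ^ ν * besselK ν (a * r)) ~[atTop]
      fun r => √(π / (2 * a)) * (r ^ (ν - 1 / 2) * exp (-a * r)) := by
  have hK := (isEquivalent_besselK ν).comp_tendsto (tendsto_id.const_mul_atTop ha)
  refine ((IsEquivalent.refl (u := fun r : ℝ => r ^ ν)).mul hK).congr_right ?_
  filter_upwards [eventually_gt_atTop 0] with r hr
  simp only [Pi.mul_apply, Function.comp, id]
  rw [← mul_assoc 2, ← div_div, sqrt_div' _ hr.le, rpow_sub hr, ← sqrt_eq_rpow, neg_mul]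
  ring

lemma eventually_ne_cocompact {X : Type*} [TopologicalSpace X] (a : X) :
    ∀ᶠ x in cocompact X, x ≠ a :=
  isCompact_singleton.compl_mem_cocompact

lemma tendsto_sub_const_cocompact {G : Type*} [AddGroup G] [TopologicalSpace G]
    [IsTopologicalAddGroup G] (c : G) :
    Tendsto (fun x : G => x - c) (cocompact G) (cocompact G) :=
  (Homeomorph.subRight c).isClosedEmbedding.tendsto_cocompact

lemma isEquivalent_of_sub_isBigO_one {ι E : Type*} [NormedAddCommGroup E] {l : Filter ι}
    {f g : ι → E} (hfg : (fun x => f x - g x) =O[l] fun _ => (1 : ℝ))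
    (hg : Tendsto (fun x => ‖g x‖) l atTop) : f ~[l] g :=
  hfg.trans_isLittleO <| (isLittleO_const_left (c := (1 : ℝ))).2 <| Or.inr hg

lemma isEquivalent_norm_sub {E : Type*} [NormedAddCommGroup E] [ProperSpace E] (c : E) :
    (fun x : E => ‖x - c‖) ~[cocompact E] fun x => ‖x‖ := by
  refine isEquivalent_of_sub_isBigO_one (IsBigO.of_bound ‖c‖ <| Eventually.of_forall fun x => ?_)
    (tendsto_norm_atTop_atTop.comp tendsto_norm_cocompact_atTop)
  simpa using abs_norm_sub_norm_le (x - c) x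

lemma isEquivalent_exp_of_tendsto_sub {ι : Type*} {l : Filter ι} {f g : ι → ℝ}
    (h : Tendsto (fun x => f x - g x) l (𝓝 0)) :
    (fun x => exp (f x)) ~[l] fun x => exp (g x) := by
  apply isEquivalent_of_tendsto_one
  simpa only [exp_zero, exp_sub] using! h.rexp

lemma abs_le_sqrt_sq_add_sq (δ u : ℝ) : |u| ≤ √(δ ^ 2 + u ^ 2) :=
  abs_le_sqrt (le_add_of_nonneg_left (sq_nonneg δ))

lemma tendsto_sqrt_sq_add_sq_cocompact_atTop (δ : ℝ) :
    Tendsto (fun u : ℝ => √(δ ^ 2 + u ^ 2)) (cocompact ℝ) atTop :=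
  tendsto_atTop_mono (abs_le_sqrt_sq_add_sq δ) tendsto_norm_cocompact_atTop

lemma tendsto_sqrt_sq_add_sq_sub_abs (δ : ℝ) :
    Tendsto (fun u : ℝ => √(δ ^ 2 + u ^ 2) - |u|) (cocompact ℝ) (𝓝 0) := by
  refine squeeze_zero' (Eventually.of_forall fun u => sub_nonneg.2 (abs_le_sqrt_sq_add_sq δ u)) ?_
    (tendsto_norm_cocompact_atTop.const_div_atTop (δ ^ 2))
  filter_upwards [eventually_ne_cocompact 0] with u hu
  rw [norm_eq_abs, le_div_iff₀ (abs_pos.2 hu)]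
  nlinarith [abs_le_sqrt_sq_add_sq δ u, sq_sqrt (add_nonneg (sq_nonneg δ) (sq_nonneg u)), sq_abs u]

lemma isEquivalent_sqrt_sq_add_sq (δ : ℝ) :
    (fun u : ℝ => √(δ ^ 2 + u ^ 2)) ~[cocompact ℝ] fun u => |u| :=
  isEquivalent_of_sub_isBigO_one ((tendsto_sqrt_sq_add_sq_sub_abs δ).isBigO_one ℝ)
    (tendsto_norm_atTop_atTop.comp tendsto_norm_cocompact_atTop)

/-- The power-exponential function that describes semi-heavy tails. In the tails of the generalized
hyperbolic density and of its derivative, `p = lam - 1`. -/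
noncomputable def semiheavyTail (p α β u : ℝ) : ℝ :=
  |u| ^ p * exp (-α * |u| + β * u)

lemma isBigO_mul_semiheavyTail_sub_one (p α β : ℝ) :
    (fun u => u * semiheavyTail (p - 1) α β u) =O[cocompact ℝ] semiheavyTail p α β := by
  refine IsBigO.of_bound 1 ?_
  filter_upwards [eventually_ne_cocompact 0] with u hu
  rw [semiheavyTail, semiheavyTail, norm_mul, norm_eq_abs u, norm_of_nonneg (by positivity),
    norm_of_nonneg (by positivity), rpow_sub_one (abs_ne_zero.2 hu), one_mul,
    ← mul_assoc, mul_div_cancel₀ _ (abs_ne_zero.2 hu)]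

lemma isEquivalent_semiheavyTail_sub (p α β μ : ℝ) :
    (fun x => semiheavyTail p α β (x - μ)) ~[cocompact ℝ]
      fun x => |x| ^ p * exp (-α * |x - μ| + β * (x - μ)) :=
  ((isEquivalent_norm_sub μ).rpow fun x => norm_nonneg x).mul .refl

lemma isBigO_semiheavyTail_sub (p α β μ : ℝ) :
    (fun x => semiheavyTail p α β (x - μ)) =O[cocompact ℝ] semiheavyTail p α β := by
  refine (isEquivalent_semiheavyTail_sub p α β μ).isBigO.trans <|
    (isBigO_refl _ _).mul <| isBigO_exp_comp_exp_comp.2 <|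
      isBoundedUnder_of ⟨|α| * |μ| + |β * μ|, fun x => ?_⟩
  have hα : α * (|x| - |x - μ|) ≤ |α| * |μ| := by
    have hdiff : |(|x| - |x - μ|)| ≤ |μ| := by
      simpa only [sub_sub_cancel] using abs_abs_sub_abs_le_abs_sub x (x - μ)
    refine (le_abs_self _).trans ?_
    rw [abs_mul]
    exact mul_le_mul_of_nonneg_left hdiff (abs_nonneg α)
  simp only [Pi.sub_apply]
  linarith [neg_abs_le (β * μ)]

/-- The generalized hyperbolic density centred at `0`, without its normalizing constant. -/
noncomputable def ghKernel (lam α β δ u : ℝ) : ℝ :=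
  exp (β * u) *
    (√(δ ^ 2 + u ^ 2) ^ (lam - 1 / 2) * besselK (lam - 1 / 2) (α * √(δ ^ 2 + u ^ 2)))

lemma isEquivalent_ghKernel {α : ℝ} (hα : 0 < α) (lam β δ : ℝ) :
    ghKernel lam α β δ ~[cocompact ℝ]
      fun u => √(π / (2 * α)) * semiheavyTail (lam - 1) α β u := by
  have hradial := (isEquivalent_rpow_mul_besselK hα (lam - 1 / 2)).comp_tendsto
    (tendsto_sqrt_sq_add_sq_cocompact_atTop δ)
  rw [show lam - 1 / 2 - 1 / 2 = lam - 1 by ring] at hradial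
  have hpow := (isEquivalent_sqrt_sq_add_sq δ).rpow (r := lam - 1) fun u => abs_nonneg u
  have hexp : (fun u => exp (-α * √(δ ^ 2 + u ^ 2))) ~[cocompact ℝ] fun u => exp (-α * |u|) := by
    apply isEquivalent_exp_of_tendsto_sub
    simpa only [mul_sub, mul_zero] using (tendsto_sqrt_sq_add_sq_sub_abs δ).const_mul (-α)
  have hprod := (IsEquivalent.refl (u := fun u => exp (β * u))).mul <|
    hradial.trans <| (IsEquivalent.refl (u := fun _ => √(π / (2 * α)))).mul (hpow.mul hexp)
  refine hprod.congr_right (Eventually.of_forall fun u => ?_)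
  simp only [Pi.mul_apply, Pi.pow_apply, semiheavyTail, exp_add]
  ring

lemma isBigO_ghKernel {α : ℝ} (hα : 0 < α) (lam β δ : ℝ) :
    ghKernel lam α β δ =O[cocompact ℝ] semiheavyTail (lam - 1) α β :=
  (isEquivalent_ghKernel hα lam β δ).isBigO.trans (isBigO_const_mul_self _ _ _)

lemma hasDerivAt_ghKernel {α δ u : ℝ} (hα : 0 < α) (hu : δ ^ 2 + u ^ 2 ≠ 0) (lam β : ℝ) :
    HasDerivAt (ghKernel lam α β δ)
      (β * ghKernel lam α β δ u - α * (u * ghKernel (lam - 1) α β δ u)) u := by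
  have hr : 0 < √(δ ^ 2 + u ^ 2) := sqrt_pos.2 (by positivity)
  have hsqrt : HasDerivAt (fun u => √(δ ^ 2 + u ^ 2)) (2 * u / (2 * √(δ ^ 2 + u ^ 2))) u := by
    simpa using ((hasDerivAt_pow 2 u).const_add (δ ^ 2)).sqrt hu
  have hexp := ((hasDerivAt_id u).const_mul β).exp
  have hradial := (hasDerivAt_rpow_mul_besselK hr hα (lam - 1 / 2)).comp u hsqrt
  convert! hexp.mul hradial using 1
  simp only [ghKernel, Function.comp, id, sub_right_comm lam 1, rpow_sub_one hr.ne']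
  field_simp
  ring

lemma isBigO_deriv_ghKernel {α : ℝ} (hα : 0 < α) (lam β δ : ℝ) :
    deriv (ghKernel lam α β δ) =O[cocompact ℝ] semiheavyTail (lam - 1) α β := by
  have hmul : (fun u => u * ghKernel (lam - 1) α β δ u) =O[cocompact ℝ]
      semiheavyTail (lam - 1) α β :=
    ((isBigO_refl (fun u : ℝ => u) _).mul (isBigO_ghKernel hα (lam - 1) β δ)).trans
      (isBigO_mul_semiheavyTail_sub_one _ α β)
  refine (((isBigO_ghKernel hα lam β δ).const_mul_left β).sub
    (hmul.const_mul_left α)).congr' ?_ .rfl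
  filter_upwards [eventually_ne_cocompact 0] with u hu
  exact (hasDerivAt_ghKernel hα (by positivity) lam β).deriv.symm

/-- The normalizing constant of the generalized hyperbolic density. -/
noncomputable def ghNormConst (lam α β δ : ℝ) : ℝ :=
  (α ^ 2 - β ^ 2) ^ (lam / 2) /
    (√(2 * π) * α ^ (lam - 1 / 2) * δ ^ lam * besselK lam (δ * √(α ^ 2 - β ^ 2)))

lemma ghPdf_eq_ghNormConst_mul_ghKernel (lam α β δ μ : ℝ) :
    ghPdf lam α β δ μ =
      fun x => ghNormConst lam α β δ * ghKernel lam α β δ (x - μ) := by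
  ext x
  have hpow : √(δ ^ 2 + (x - μ) ^ 2) ^ (lam - 1 / 2) =
      (δ ^ 2 + (x - μ) ^ 2) ^ ((lam - 1 / 2) / 2) := by
    rw [sqrt_eq_rpow, ← rpow_mul (by positivity)]
    ring_nf
  rw [ghPdf, ghNormConst, ghKernel, hpow]
  ring

lemma ghNormConst_mul_sqrt {α δ : ℝ} (hα : 0 < α) (hδ : 0 ≤ δ) (lam β : ℝ) :
    ghNormConst lam α β δ * √(π / (2 * α)) =
      (α ^ 2 - β ^ 2) ^ (lam / 2) /
        (2 * (α * δ) ^ lam * besselK lam (δ * √(α ^ 2 - β ^ 2))) := by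
  have hsqrt : √(π / (2 * α)) = √(2 * π) / (2 * √α) := by
    rw [show π / (2 * α) = 2 * π / (2 ^ 2 * α) by field_simp, sqrt_div' (2 * π) (by positivity),
      sqrt_mul (by positivity : (0 : ℝ) ≤ 2 ^ 2), sqrt_sq zero_le_two]
  rw [ghNormConst, hsqrt, mul_rpow hα.le hδ, rpow_sub hα, ← sqrt_eq_rpow, div_mul_div_comm]
  field_simp

theorem stmt9 (lam α β δ μ : ℝ) (hδ : 0 < δ) (hαβ : |β| < α) :
    (ghPdf lam α β δ μ) ~[Filter.cocompact ℝ]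
      (fun x => ((α ^ 2 - β ^ 2) ^ (lam / 2) /
          (2 * (α * δ) ^ lam * besselK lam (δ * Real.sqrt (α ^ 2 - β ^ 2)))) *
        |x| ^ (lam - 1) * Real.exp (-α * |x - μ| + β * (x - μ)))
    ∧ (ghPdf lam α β δ μ) =O[Filter.cocompact ℝ]
        (fun x => |x| ^ (lam - 1) * Real.exp (-α * |x| + β * x))
    ∧ (deriv (ghPdf lam α β δ μ)) =O[Filter.cocompact ℝ]
        (fun x => |x| ^ (lam - 1) * Real.exp (-α * |x| + β * x)) := by
  have hα : 0 < α := (abs_nonneg β).trans_lt hαβ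
  have hshift := tendsto_sub_const_cocompact μ
  have htail := isBigO_semiheavyTail_sub (lam - 1) α β μ
  rw [ghPdf_eq_ghNormConst_mul_ghKernel]
  refine ⟨?_, IsBigO.const_mul_left ?_ _, ?_⟩
  · have hkernel := ((isEquivalent_ghKernel hα lam β δ).comp_tendsto hshift).trans <|
      (IsEquivalent.refl (u := fun _ => √(π / (2 * α)))).mul
        (isEquivalent_semiheavyTail_sub (lam - 1) α β μ)
    refine ((IsEquivalent.refl (u := fun _ => ghNormConst lam α β δ)).mul hkernel).congr_right
      (Eventually.of_forall fun x => ?_)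
    simp only [Pi.mul_apply, ← ghNormConst_mul_sqrt hα hδ.le]
    ring
  · exact ((isBigO_ghKernel hα lam β δ).comp_tendsto hshift).trans htail
  · have hderiv := ((isBigO_deriv_ghKernel hα lam β δ).comp_tendsto hshift).trans htail
    refine (hderiv.const_mul_left (ghNormConst lam α β δ)).congr_left fun x => ?_
    rw [deriv_const_mul_field, deriv_comp_sub_const, Function.comp]
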